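/- Fix u, v ∈ ℂ and a positive integer α. For every pair of real numbers 0 < a ≤ b and every N ∈ ℕ there exists a constant C > 0 such that |g*(σ + it; u, v)| ≤ C (1 + |t|)^{−N} for all σ ∈ [a, b] and all t ∈ ℝ. -/

import Mathlib

/-!
On `(0, 1)` the function `gtilde` is smooth, and it vanishes to infinite order at `x = 1`: shifting
the line of integration in the Fourier integral gives `fhat g ξ = O(exp (-A ξ))` for every `A`
(`norm_fhat_le`), and with `ξ = log ((1 + x) / (1 - x))` this is `O((1 - x) ^ A)`, which beats the
power `(1 - x) ^ (-(u + α))`.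

The derivative of `fhat h (log ((1 + x) / (1 - x))) (1 - x) ^ (-p) (1 + x) ^ (-q)` is a linear
combination of three functions of the same shape, where `h z` may be replaced by `-I z h z`
(`hasDerivAt_wfun`). Hence the Mellin integral can be integrated by parts without boundary terms
(`mellin_by_parts`), any number of times. Each step divides by `s`, which has size at least a
constant times `1 + |Im s|` in the strip, and this gives the decay of order `N` by induction
(`mellin_decay`).
-/

open Complex MeasureTheory

/-- Fourier transform `ĝ(ξ) = ∫_ℝ g(t) e^{−iξt} dt`. -/
noncomputable def fhat (g : ℂ → ℂ) (ξ : ℝ) : ℂ :=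
  ∫ t : ℝ, g t * Complex.exp (-(Complex.I * ξ * t))

/-- `g̃(x; u, v) = 2^{u+v+2α} ĝ(log((1+x)/(1−x))) (1−x)^{−(u+α)} (1+x)^{−(v+α)}`. -/
noncomputable def gtilde (g : ℂ → ℂ) (α : ℕ) (x : ℝ) (u v : ℂ) : ℂ :=
  (2 : ℂ) ^ (u + v + 2 * (α : ℂ)) * fhat g (Real.log ((1 + x) / (1 - x))) *
    ((1 - x : ℝ) : ℂ) ^ (-(u + (α : ℂ))) * ((1 + x : ℝ) : ℂ) ^ (-(v + (α : ℂ)))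

/-- Mellin transform `g*(s; u, v) = ∫₀¹ x^{s−1} g̃(x; u, v) dx`. -/
noncomputable def gstar (g : ℂ → ℂ) (α : ℕ) (s u v : ℂ) : ℂ :=
  ∫ x in Set.Ioo (0 : ℝ) 1, (x : ℂ) ^ (s - 1) * gtilde g α x u v

/-! ### Fourier transforms of entire functions of rapid decay -/

/-- Entire functions that decay faster than every power of `|Re z|`, uniformly in each horizontal
strip. Evenness and reality on `ℝ` are left out so that the class is stable under
multiplication by `z`. -/
structure StripDecay (h : ℂ → ℂ) : Prop where
  diff : Differentiable ℂ h
  decay : ∀ A > (0 : ℝ), ∀ N : ℕ, ∃ C : ℝ, ∀ z : ℂ, |z.im| ≤ A →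
      (1 + |z.re|) ^ N * ‖h z‖ ≤ C

/-- Differentiating `fhat h` multiplies `h z` by `-I * z`, so this keeps all derivatives of
`fhat h` within the same class. -/
lemma StripDecay.mul_id {h : ℂ → ℂ} (hh : StripDecay h) :
    StripDecay (fun z => -(I * z) * h z) := by
  refine ⟨((differentiable_const _).mul differentiable_id).neg.mul hh.diff, fun A hA N => ?_⟩
  obtain ⟨C, hC⟩ := hh.decay A hA (N + 1)
  refine ⟨(1 + A) * C, fun z hz => ?_⟩
  have h1 : ‖z‖ ≤ (1 + A) * (1 + |z.re|) := by
    have := Complex.norm_le_abs_re_add_abs_im z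
    nlinarith [abs_nonneg z.re]
  have h2 : ‖-(I * z) * h z‖ = ‖z‖ * ‖h z‖ := by simp
  rw [h2]
  calc (1 + |z.re|) ^ N * (‖z‖ * ‖h z‖)
      ≤ (1 + |z.re|) ^ N * ((1 + A) * (1 + |z.re|) * ‖h z‖) := by gcongr
    _ = (1 + A) * ((1 + |z.re|) ^ (N + 1) * ‖h z‖) := by ring
    _ ≤ (1 + A) * C := by gcongr; exact hC z hz

lemma StripDecay.bound {h : ℂ → ℂ} (hh : StripDecay h) {A : ℝ} (hA : 0 < A) :
    ∃ C : ℝ, 0 ≤ C ∧ ∀ z : ℂ, |z.im| ≤ A → ‖h z‖ ≤ C * (1 + z.re ^ 2)⁻¹ := by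
  obtain ⟨C, hC⟩ := hh.decay A hA 2
  refine ⟨C, le_trans (by positivity) (hC 0 (by simpa using hA.le)), fun z hz => ?_⟩
  rw [← div_eq_mul_inv, le_div_iff₀ (by positivity), mul_comm]
  refine le_trans ?_ (hC z hz)
  gcongr
  nlinarith [abs_nonneg z.re, sq_abs z.re]

lemma integrable_of_le_inv_one_add_sq {f : ℝ → ℂ} (hf : Continuous f) {C : ℝ}
    (hC : ∀ t, ‖f t‖ ≤ C * (1 + t ^ 2)⁻¹) : Integrable f :=
  (integrable_inv_one_add_sq.const_mul C).mono' hf.aestronglyMeasurable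
    (Filter.Eventually.of_forall hC)

lemma norm_mul_exp_line (h : ℂ → ℂ) (ξ : ℝ) (z : ℂ) :
    ‖h z * Complex.exp (-(I * ξ * z))‖ = ‖h z‖ * Real.exp (ξ * z.im) := by
  rw [norm_mul, Complex.norm_exp]
  simp

lemma hasDerivAt_fhat {h : ℂ → ℂ} (hh : StripDecay h) (ξ : ℝ) :
    HasDerivAt (fhat h) (fhat (fun z => -(I * z) * h z) ξ) ξ := by
  obtain ⟨C, -, hC⟩ := hh.bound one_pos
  obtain ⟨C', -, hC'⟩ := hh.mul_id.bound one_pos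
  have hc := hh.diff.continuous
  have hcont : ∀ x : ℝ, Continuous fun t : ℝ => h t * Complex.exp (-(I * x * t)) := by
    intro x; fun_prop
  have hcont' : ∀ x : ℝ, Continuous fun t : ℝ =>
      (-(I * t) * h t) * Complex.exp (-(I * x * t)) := by
    intro x; fun_prop
  refine (hasDerivAt_integral_of_dominated_loc_of_deriv_le
    (F := fun (x t : ℝ) => h t * Complex.exp (-(I * x * t)))
    (F' := fun (x t : ℝ) => (-(I * t) * h t) * Complex.exp (-(I * x * t)))
    (bound := fun t : ℝ => C' * (1 + t ^ 2)⁻¹)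
    Filter.univ_mem (Filter.Eventually.of_forall fun x => (hcont x).aestronglyMeasurable)
    (integrable_of_le_inv_one_add_sq (hcont ξ) (C := C) fun t => ?_)
    (hcont' ξ).aestronglyMeasurable (Filter.Eventually.of_forall fun t x _ => ?_)
    (integrable_inv_one_add_sq.const_mul C') (Filter.Eventually.of_forall fun t x _ => ?_)).2
  · rw [norm_mul_exp_line]
    simpa using hC t (by simp)
  · rw [norm_mul_exp_line (fun z => -(I * z) * h z)]
    simpa using hC' t (by simp)
  · have h1 : HasDerivAt (fun x : ℝ => -(I * (x : ℂ) * t)) (-(I * 1 * t)) x :=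
      (((hasDerivAt_id x).ofReal_comp.const_mul I).mul_const (t : ℂ)).neg
    exact (h1.cexp.const_mul (h t)).congr_deriv (by ring)

open Filter Topology in
/-- Moving the line of integration from `ℝ` down to `ℝ - A * I`. -/
lemma fhat_shift {h : ℂ → ℂ} (hh : StripDecay h) {A ξ : ℝ} (hA : 0 < A) (hξ : 0 ≤ ξ) :
    fhat h ξ = ∫ t : ℝ, h (t + ((-A : ℝ) : ℂ) * I) *
      Complex.exp (-(I * ξ * (t + ((-A : ℝ) : ℂ) * I))) := by
  obtain ⟨C, hC0, hC⟩ := hh.bound hA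
  set f : ℂ → ℂ := fun z => h z * Complex.exp (-(I * ξ * z)) with hf
  have hfd : Differentiable ℂ f := by
    have := hh.diff
    intro z
    fun_prop
  have hfc := hfd.continuous
  have hb : ∀ z : ℂ, -A ≤ z.im → z.im ≤ 0 → ‖f z‖ ≤ C * (1 + z.re ^ 2)⁻¹ := by
    intro z h1 h2
    rw [hf, norm_mul_exp_line]
    refine le_trans (mul_le_of_le_one_right (norm_nonneg _) ?_)
      (hC z (abs_le.2 ⟨h1, h2.trans hA.le⟩))
    exact Real.exp_le_one_iff.2 (mul_nonpos_of_nonneg_of_nonpos hξ h2)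
  have i0 : Integrable fun t : ℝ => f t :=
    integrable_of_le_inv_one_add_sq (by fun_prop) (C := C) fun t => by
      simpa using hb t (by simpa using hA.le) (by simp)
  have i1 : Integrable fun t : ℝ => f (t + ((-A : ℝ) : ℂ) * I) :=
    integrable_of_le_inv_one_add_sq (by fun_prop) (C := C) fun t => by
      simpa using hb (t + ((-A : ℝ) : ℂ) * I) (by simp) (by simpa using hA.le)
  have t0 := intervalIntegral_tendsto_integral i0 tendsto_neg_atTop_atBot tendsto_id
  have t1 := intervalIntegral_tendsto_integral i1 tendsto_neg_atTop_atBot tendsto_id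
  have tz : Tendsto (fun T : ℝ => C * (1 + T ^ 2)⁻¹ * |0 - -A|) atTop (𝓝 0) := by
    have : Tendsto (fun T : ℝ => (1 + T ^ 2)⁻¹) atTop (𝓝 0) :=
      tendsto_inv_atTop_zero.comp
        (tendsto_atTop_add_const_left _ _ (tendsto_pow_atTop two_ne_zero))
    simpa using (this.const_mul C).mul_const |0 - -A|
  have side : ∀ T S : ℝ, S ^ 2 = T ^ 2 →
      ‖∫ y : ℝ in (-A)..0, f (S + y * I)‖ ≤ C * (1 + T ^ 2)⁻¹ * |0 - -A| := by
    intro T S hS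
    refine intervalIntegral.norm_integral_le_of_norm_le_const fun y hy => ?_
    rw [Set.uIoc_of_le (by linarith)] at hy
    have := hb (S + y * I) (by simpa using hy.1.le) (by simpa using hy.2)
    simpa [hS] using this
  have s1 : Tendsto (fun T : ℝ => ∫ y : ℝ in (-A)..0, f (T + y * I)) atTop (𝓝 0) :=
    squeeze_zero_norm (fun T => side T T rfl) tz
  have s2 : Tendsto (fun T : ℝ => ∫ y : ℝ in (-A)..0, f ((-T : ℝ) + y * I)) atTop (𝓝 0) :=
    squeeze_zero_norm (fun T => side T (-T) (by ring)) tz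
  have key : ∀ T : ℝ, (∫ x : ℝ in (-T)..T, f (x + ((-A : ℝ) : ℂ) * I)) - (∫ x : ℝ in (-T)..T, f x)
      + I • (∫ y : ℝ in (-A)..0, f (T + y * I))
      - I • (∫ y : ℝ in (-A)..0, f ((-T : ℝ) + y * I)) = 0 := by
    intro T
    have := Complex.integral_boundary_rect_eq_zero_of_differentiableOn f ⟨-T, -A⟩ ⟨T, 0⟩
      hfd.differentiableOn
    simpa using this
  have lim := ((t1.sub t0).add (s1.const_smul I)).sub (s2.const_smul I)
  have h0 := tendsto_nhds_unique (lim.congr fun T => key T) tendsto_const_nhds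
  simp only [smul_zero, add_zero, sub_zero] at h0
  exact (sub_eq_zero.1 h0).symm

/-- Exponential decay of every rate, because the line of integration can be moved down by any
amount. -/
lemma norm_fhat_le {h : ℂ → ℂ} (hh : StripDecay h) {A : ℝ} (hA : 0 < A) :
    ∃ C : ℝ, 0 ≤ C ∧ ∀ ξ : ℝ, 0 ≤ ξ → ‖fhat h ξ‖ ≤ C * Real.exp (-(A * ξ)) := by
  obtain ⟨C, hC0, hC⟩ := hh.bound hA
  refine ⟨C * Real.pi, by positivity, fun ξ hξ => ?_⟩
  rw [fhat_shift hh hA hξ]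
  refine (norm_integral_le_of_norm_le
    (integrable_inv_one_add_sq.const_mul (C * Real.exp (-(A * ξ))))
    (Filter.Eventually.of_forall fun t => ?_)).trans_eq ?_
  · rw [norm_mul_exp_line]
    have h1 := hC (t + ((-A : ℝ) : ℂ) * I) (by simp [abs_of_pos hA])
    have h2 : ξ * (t + ((-A : ℝ) : ℂ) * I : ℂ).im = -(A * ξ) := by simp; ring
    rw [h2, mul_right_comm]
    gcongr
    simpa using h1
  · rw [integral_const_mul, integral_univ_inv_one_add_sq]
    ring

/-! ### The weighted functions on the unit interval -/

/-- The `x`-dependent part of `gtilde`, with arbitrary exponents `-p` and `-q`. The linear span of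
these functions (`h` of rapid decay in strips) is stable under differentiation. -/
noncomputable def wfun (h : ℂ → ℂ) (p q : ℂ) (x : ℝ) : ℂ :=
  fhat h (Real.log ((1 + x) / (1 - x))) * ((1 - x : ℝ) : ℂ) ^ (-p) * ((1 + x : ℝ) : ℂ) ^ (-q)

lemma hasDerivAt_ofReal_cpow_comp {φ : ℝ → ℝ} {φ' x : ℝ} (r : ℂ) (hφ : HasDerivAt φ φ' x)
    (hpos : 0 < φ x) :
    HasDerivAt (fun y => ((φ y : ℝ) : ℂ) ^ r) (r * ((φ x : ℝ) : ℂ) ^ (r - 1) * φ') x := by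
  have h1 : HasDerivAt (fun z : ℂ => z ^ r) (r * ((φ x : ℝ) : ℂ) ^ (r - 1) * 1) ((φ x : ℝ) : ℂ) :=
    (hasDerivAt_id _).cpow_const (Or.inl (by simpa using hpos))
  rw [mul_one] at h1
  exact h1.comp x hφ.ofReal_comp

lemma hasDerivAt_wfun {h : ℂ → ℂ} (hh : StripDecay h) (p q : ℂ) {x : ℝ}
    (hx : x ∈ Set.Ioo (0 : ℝ) 1) :
    HasDerivAt (wfun h p q)
      (2 * wfun (fun z => -(I * z) * h z) (p + 1) (q + 1) x + p * wfun h (p + 1) q x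
        - q * wfun h p (q + 1) x) x := by
  obtain ⟨hx0, hx1⟩ := hx
  have h1 : (0 : ℝ) < 1 - x := by linarith
  have h2 : (0 : ℝ) < 1 + x := by linarith
  have d1 : HasDerivAt (fun y : ℝ => 1 - y) (-1) x := by
    simpa using (hasDerivAt_id x).const_sub 1
  have d2 : HasDerivAt (fun y : ℝ => 1 + y) 1 x := by
    simpa using (hasDerivAt_id x).const_add 1
  have dl : HasDerivAt (fun y : ℝ => Real.log ((1 + y) / (1 - y))) (2 / ((1 - x) * (1 + x))) x := by
    refine ((d2.fun_div d1 h1.ne').log (div_pos h2 h1).ne').congr_deriv ?_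
    field_simp
    ring
  have df := (hasDerivAt_fhat hh (Real.log ((1 + x) / (1 - x)))).scomp x dl
  have e : ∀ (y : ℝ) (r : ℂ), 0 < y → (y : ℂ) ^ (-(r + 1)) = (y : ℂ) ^ (-r) / y := by
    intro y r hy
    rw [neg_add', Complex.cpow_sub _ _ (by exact_mod_cast hy.ne'), Complex.cpow_one]
  have e' : ∀ (y : ℝ) (r : ℂ), 0 < y → (y : ℂ) ^ (-r - 1) = (y : ℂ) ^ (-r) / y := by
    intro y r hy
    rw [Complex.cpow_sub _ _ (by exact_mod_cast hy.ne'), Complex.cpow_one]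
  have n1 : ((1 - x : ℝ) : ℂ) ≠ 0 := by exact_mod_cast h1.ne'
  have n2 : ((1 + x : ℝ) : ℂ) ≠ 0 := by exact_mod_cast h2.ne'
  refine ((df.mul (hasDerivAt_ofReal_cpow_comp (-p) d1 h1)).mul
    (hasDerivAt_ofReal_cpow_comp (-q) d2 h2)).congr_deriv ?_
  simp only [wfun, Function.comp, e _ _ h1, e _ _ h2, e' _ _ h1, e' _ _ h2, Complex.real_smul,
    Pi.mul_apply]
  rw [Complex.ofReal_div, Complex.ofReal_mul]
  generalize ((1 - x : ℝ) : ℂ) = X at *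
  generalize ((1 + x : ℝ) : ℂ) = Y at *
  push_cast
  field_simp
  ring

/-- The decay of `fhat h` beats the power of `1 - x`, whatever its exponent. -/
lemma norm_wfun_le {h : ℂ → ℂ} (hh : StripDecay h) (p q : ℂ) :
    ∃ C : ℝ, 0 ≤ C ∧ ∀ x ∈ Set.Ioo (0 : ℝ) 1, ‖wfun h p q x‖ ≤ C * (1 - x) := by
  set A : ℝ := |p.re| + 1 with hAdef
  have hA : 0 < A := by positivity
  obtain ⟨C, hC0, hC⟩ := norm_fhat_le hh hA
  refine ⟨C * 2 ^ |q.re|, by positivity, fun x hx => ?_⟩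
  obtain ⟨hx0, hx1⟩ := hx
  have h1 : (0 : ℝ) < 1 - x := by linarith
  have h2 : (0 : ℝ) < 1 + x := by linarith
  have hξ : 0 ≤ Real.log ((1 + x) / (1 - x)) :=
    Real.log_nonneg ((one_le_div h1).2 (by linarith))
  have b1 : ‖fhat h (Real.log ((1 + x) / (1 - x)))‖ ≤ C * (1 - x) ^ A := by
    refine (hC _ hξ).trans ?_
    gcongr
    rw [Real.rpow_def_of_pos h1, Real.exp_le_exp, Real.log_div h2.ne' h1.ne']
    nlinarith [mul_nonneg hA.le (Real.log_nonneg (show (1 : ℝ) ≤ 1 + x by linarith))]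
  have b2 : (1 + x) ^ (-q.re) ≤ (2 : ℝ) ^ |q.re| :=
    (Real.rpow_le_rpow_of_exponent_le (by linarith) (neg_le_abs _)).trans
      (Real.rpow_le_rpow h2.le (by linarith) (abs_nonneg _))
  have b3 : (1 - x) ^ A * (1 - x) ^ (-p.re) ≤ 1 - x := by
    rw [← Real.rpow_add h1]
    refine (Real.rpow_le_rpow_of_exponent_ge h1 (by linarith) (?_ : (1 : ℝ) ≤ _)).trans_eq
      (Real.rpow_one _)
    rw [hAdef]
    linarith [le_abs_self p.re]
  rw [wfun, norm_mul, norm_mul, Complex.norm_cpow_eq_rpow_re_of_pos h1,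
    Complex.norm_cpow_eq_rpow_re_of_pos h2, Complex.neg_re, Complex.neg_re]
  calc _ ≤ C * (1 - x) ^ A * (1 - x) ^ (-p.re) * 2 ^ |q.re| := by gcongr
    _ = C * 2 ^ |q.re| * ((1 - x) ^ A * (1 - x) ^ (-p.re)) := by ring
    _ ≤ _ := by gcongr

/-! ### Mellin integrals -/

lemma norm_cpow_mul_wfun_le {h : ℂ → ℂ} {p q : ℂ} {C : ℝ} (hC0 : 0 ≤ C)
    (hC : ∀ x ∈ Set.Ioo (0 : ℝ) 1, ‖wfun h p q x‖ ≤ C * (1 - x)) (s : ℂ) {x : ℝ}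
    (hx : x ∈ Set.Ioo (0 : ℝ) 1) :
    ‖(x : ℂ) ^ (s - 1) * wfun h p q x‖ ≤ C * x ^ (s.re - 1) := by
  rw [norm_mul, Complex.norm_cpow_eq_rpow_re_of_pos hx.1, mul_comm]
  have := hx.1
  have h1 : C * (1 - x) ≤ C := mul_le_of_le_one_right hC0 (by linarith)
  simp only [Complex.sub_re, Complex.one_re]
  gcongr
  exact (hC x hx).trans h1

lemma integrableOn_rpow_Ioo {r : ℝ} (hr : 0 < r) :
    IntegrableOn (fun x : ℝ => x ^ (r - 1)) (Set.Ioo 0 1) := by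
  have := intervalIntegral.intervalIntegrable_rpow' (a := 0) (b := 1) (r := r - 1) (by linarith)
  rw [intervalIntegrable_iff_integrableOn_Ioo_of_le zero_le_one] at this
  exact this

lemma integrableOn_mellin {h : ℂ → ℂ} (hh : StripDecay h) (p q : ℂ) {s : ℂ} (hs : 0 < s.re) :
    IntegrableOn (fun x : ℝ => (x : ℂ) ^ (s - 1) * wfun h p q x) (Set.Ioo 0 1) := by
  obtain ⟨C, hC0, hC⟩ := norm_wfun_le hh p q
  refine ((integrableOn_rpow_Ioo hs).const_mul C).mono' ?_ ?_
  · refine ContinuousOn.aestronglyMeasurable (fun x hx => ?_) measurableSet_Ioo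
    refine ContinuousAt.continuousWithinAt (ContinuousAt.mul ?_
      (hasDerivAt_wfun hh p q hx).continuousAt)
    exact (hasDerivAt_ofReal_cpow_comp (s - 1) (hasDerivAt_id x) hx.1).continuousAt
  · exact (ae_restrict_iff' measurableSet_Ioo).2
      (Filter.Eventually.of_forall fun x hx => norm_cpow_mul_wfun_le hC0 hC s hx)

open Filter Topology in
/-- Integration by parts; the boundary terms vanish since `Re s > 0` and `wfun` vanishes at `1`. -/
lemma mellin_by_parts {h : ℂ → ℂ} (hh : StripDecay h) (p q : ℂ) {s : ℂ} (hs : 0 < s.re) :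
    s * ∫ x in Set.Ioo (0 : ℝ) 1, (x : ℂ) ^ (s - 1) * wfun h p q x =
      -(2 * (∫ x in Set.Ioo (0 : ℝ) 1,
            (x : ℂ) ^ (s + 1 - 1) * wfun (fun z => -(I * z) * h z) (p + 1) (q + 1) x)
        + p * (∫ x in Set.Ioo (0 : ℝ) 1, (x : ℂ) ^ (s + 1 - 1) * wfun h (p + 1) q x)
        - q * ∫ x in Set.Ioo (0 : ℝ) 1, (x : ℂ) ^ (s + 1 - 1) * wfun h p (q + 1) x) := by
  obtain ⟨C, hC0, hC⟩ := norm_wfun_le hh p q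
  have hs1 : 0 < (s + 1).re := by simp; linarith
  have i0 := (integrableOn_mellin hh p q hs).const_mul s
  have i1 := (integrableOn_mellin hh.mul_id (p + 1) (q + 1) hs1).const_mul 2
  have i2 := (integrableOn_mellin hh (p + 1) q hs1).const_mul p
  have i3 := (integrableOn_mellin hh p (q + 1) hs1).const_mul q
  have hd : ∀ x ∈ Set.Ioo (0 : ℝ) 1, HasDerivAt (fun x : ℝ => (x : ℂ) ^ s * wfun h p q x)
      (s * ((x : ℂ) ^ (s - 1) * wfun h p q x)
        + (2 * ((x : ℂ) ^ (s + 1 - 1) * wfun (fun z => -(I * z) * h z) (p + 1) (q + 1) x)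
        + p * ((x : ℂ) ^ (s + 1 - 1) * wfun h (p + 1) q x)
        - q * ((x : ℂ) ^ (s + 1 - 1) * wfun h p (q + 1) x))) x := by
    intro x hx
    have h1 : HasDerivAt (fun x : ℝ => (x : ℂ) ^ s) (s * (x : ℂ) ^ (s - 1) * (1 : ℝ)) x :=
      hasDerivAt_ofReal_cpow_comp s (hasDerivAt_id x) hx.1
    refine (h1.mul (hasDerivAt_wfun hh p q hx)).congr_deriv ?_
    rw [add_sub_cancel_right]
    push_cast
    ring
  have hnorm : ∀ x ∈ Set.Ioo (0 : ℝ) 1,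
      ‖(x : ℂ) ^ s * wfun h p q x‖ ≤ x ^ s.re * (C * (1 - x)) := by
    intro x hx
    have := hx.1
    rw [norm_mul, Complex.norm_cpow_eq_rpow_re_of_pos hx.1]
    gcongr
    exact hC x hx
  have hcont : Continuous fun x : ℝ => x ^ s.re * (C * (1 - x)) := by
    have := Real.continuous_rpow_const (q := s.re) hs.le
    fun_prop
  have l0 : Tendsto (fun x : ℝ => (x : ℂ) ^ s * wfun h p q x) (𝓝[>] 0) (𝓝 0) := by
    refine squeeze_zero_norm' (a := fun x : ℝ => x ^ s.re * (C * (1 - x))) ?_ ?_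
    · filter_upwards [Ioo_mem_nhdsGT (zero_lt_one' ℝ)] with x hx using hnorm x hx
    · have := hcont.tendsto 0
      rw [Real.zero_rpow hs.ne', zero_mul] at this
      exact this.mono_left nhdsWithin_le_nhds
  have l1 : Tendsto (fun x : ℝ => (x : ℂ) ^ s * wfun h p q x) (𝓝[<] 1) (𝓝 0) := by
    refine squeeze_zero_norm' (a := fun x : ℝ => x ^ s.re * (C * (1 - x))) ?_ ?_
    · filter_upwards [Ioo_mem_nhdsLT (zero_lt_one' ℝ)] with x hx using hnorm x hx
    · have := hcont.tendsto 1
      rw [sub_self, mul_zero, mul_zero] at this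
      exact this.mono_left nhdsWithin_le_nhds
  have ftc := intervalIntegral.integral_eq_sub_of_hasDerivAt_of_tendsto zero_lt_one hd
    ((intervalIntegrable_iff_integrableOn_Ioo_of_le zero_le_one).2
      (i0.add ((i1.add i2).sub i3))) l0 l1
  rw [intervalIntegral.integral_of_le zero_le_one, integral_Ioc_eq_integral_Ioo] at ftc
  erw [integral_add i0 ((i1.add i2).sub i3), integral_sub (i1.add i2) i3, integral_add i1 i2] at ftc
  rw [integral_const_mul, integral_const_mul, integral_const_mul, integral_const_mul, sub_self] at ftc
  exact eq_neg_of_add_eq_zero_left ftc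

/-- Each integration by parts gains a factor `1 / s` and shifts the strip `[a, b]` by one, whence
the quantification over all `h`, `p`, `q`, `a`, `b` in the induction on `N`. -/
lemma mellin_decay (N : ℕ) : ∀ (h : ℂ → ℂ), StripDecay h → ∀ (p q : ℂ) (a b : ℝ), 0 < a →
    ∃ C : ℝ, ∀ s : ℂ, s.re ∈ Set.Icc a b →
      (1 + |s.im|) ^ N * ‖∫ x in Set.Ioo (0 : ℝ) 1, (x : ℂ) ^ (s - 1) * wfun h p q x‖ ≤ C := by
  induction N with
  | zero =>
    intro h hh p q a b ha
    obtain ⟨C, hC0, hC⟩ := norm_wfun_le hh p q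
    refine ⟨C * ∫ x in Set.Ioo (0 : ℝ) 1, x ^ (a - 1), fun s hs => ?_⟩
    rw [pow_zero, one_mul, ← integral_const_mul]
    refine norm_integral_le_of_norm_le ((integrableOn_rpow_Ioo ha).const_mul C)
      ((ae_restrict_iff' measurableSet_Ioo).2 (Filter.Eventually.of_forall fun x hx => ?_))
    refine (norm_cpow_mul_wfun_le hC0 hC s hx).trans (mul_le_mul_of_nonneg_left ?_ hC0)
    exact Real.rpow_le_rpow_of_exponent_ge hx.1 hx.2.le (by linarith [hs.1])
  | succ N ih =>
    intro h hh p q a b ha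
    obtain ⟨C₁, h₁⟩ := ih _ hh.mul_id (p + 1) (q + 1) (a + 1) (b + 1) (by linarith)
    obtain ⟨C₂, h₂⟩ := ih h hh (p + 1) q (a + 1) (b + 1) (by linarith)
    obtain ⟨C₃, h₃⟩ := ih h hh p (q + 1) (a + 1) (b + 1) (by linarith)
    refine ⟨(1 / a + 1) * (2 * C₁ + ‖p‖ * C₂ + ‖q‖ * C₃), fun s hs => ?_⟩
    have hs0 : 0 < s.re := ha.trans_le hs.1
    have hs1 : (s + 1).re ∈ Set.Icc (a + 1) (b + 1) := by
      simpa using hs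
    have him : (s + 1).im = s.im := by simp
    have k₁ := h₁ (s + 1) hs1
    have k₂ := h₂ (s + 1) hs1
    have k₃ := h₃ (s + 1) hs1
    rw [him] at k₁ k₂ k₃
    have parts := congrArg norm (mellin_by_parts hh p q hs0)
    rw [norm_mul, norm_neg] at parts
    set J := ∫ x in Set.Ioo (0 : ℝ) 1, (x : ℂ) ^ (s - 1) * wfun h p q x
    set J₁ := ∫ x in Set.Ioo (0 : ℝ) 1,
      (x : ℂ) ^ (s + 1 - 1) * wfun (fun z => -(I * z) * h z) (p + 1) (q + 1) x
    set J₂ := ∫ x in Set.Ioo (0 : ℝ) 1, (x : ℂ) ^ (s + 1 - 1) * wfun h (p + 1) q x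
    set J₃ := ∫ x in Set.Ioo (0 : ℝ) 1, (x : ℂ) ^ (s + 1 - 1) * wfun h p (q + 1) x
    have tri : ‖s‖ * ‖J‖ ≤ 2 * ‖J₁‖ + ‖p‖ * ‖J₂‖ + ‖q‖ * ‖J₃‖ := by
      rw [parts]
      refine (norm_sub_le _ _).trans ?_
      rw [norm_mul q]
      gcongr
      refine (norm_add_le _ _).trans_eq ?_
      simp
    have hsn : 1 + |s.im| ≤ (1 / a + 1) * ‖s‖ := by
      have u1 := Complex.abs_im_le_norm s
      have u2 : a ≤ ‖s‖ := hs.1.trans (Complex.re_le_norm s)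
      have u3 : 1 ≤ 1 / a * ‖s‖ := by
        rw [one_div, inv_mul_eq_div]
        exact (one_le_div ha).2 u2
      linarith
    set P := (1 + |s.im|) ^ N
    have hP : 0 ≤ P := by positivity
    calc (1 + |s.im|) ^ (N + 1) * ‖J‖ = P * ‖J‖ * (1 + |s.im|) := by rw [pow_succ]; ring
      _ ≤ P * ‖J‖ * ((1 / a + 1) * ‖s‖) := by gcongr
      _ = (1 / a + 1) * (P * (‖s‖ * ‖J‖)) := by ring
      _ ≤ (1 / a + 1) * (P * (2 * ‖J₁‖ + ‖p‖ * ‖J₂‖ + ‖q‖ * ‖J₃‖)) := by gcongr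
      _ = (1 / a + 1) * (2 * (P * ‖J₁‖) + ‖p‖ * (P * ‖J₂‖) + ‖q‖ * (P * ‖J₃‖)) := by ring
      _ ≤ _ := by gcongr

theorem stmt6 (g : ℂ → ℂ) (hg : Differentiable ℂ g)
    (hgeven : ∀ z : ℂ, g (-z) = g z)
    (hgreal : ∀ t : ℝ, (g (t : ℂ)).im = 0)
    (hgdecay : ∀ A > (0 : ℝ), ∀ N : ℕ, ∃ C : ℝ, ∀ z : ℂ, |z.im| ≤ A →
      (1 + |z.re|) ^ N * ‖g z‖ ≤ C)
    (α : ℕ) (hα : 1 ≤ α) (u v : ℂ) :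
    ∀ a b : ℝ, 0 < a → a ≤ b → ∀ N : ℕ, ∃ C > (0 : ℝ),
      ∀ σ : ℝ, σ ∈ Set.Icc a b → ∀ t : ℝ,
        ‖gstar g α ((σ : ℂ) + Complex.I * t) u v‖ ≤ C * (1 + |t|) ^ (-(N : ℝ)) := by
  intro a b ha hab N
  obtain ⟨C, hC⟩ := mellin_decay N g ⟨hg, hgdecay⟩ (u + α) (v + α) a b ha
  set K : ℂ := (2 : ℂ) ^ (u + v + 2 * (α : ℂ)) with hK
  refine ⟨‖K‖ * |C| + 1, by positivity, fun σ hσ t => ?_⟩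
  have hre : ((σ : ℂ) + Complex.I * t).re = σ := by simp
  have him : ((σ : ℂ) + Complex.I * t).im = t := by simp
  have hb := hC ((σ : ℂ) + Complex.I * t) (by rwa [hre])
  rw [him] at hb
  have hfac : gstar g α ((σ : ℂ) + Complex.I * t) u v = K * ∫ x in Set.Ioo (0 : ℝ) 1,
      (x : ℂ) ^ ((σ : ℂ) + Complex.I * t - 1) * wfun g (u + α) (v + α) x := by
    rw [gstar, ← integral_const_mul]
    congr 1
    funext x
    rw [gtilde, wfun, ← hK]
    ring
  have hpos : 0 < (1 + |t|) ^ N := by positivity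
  rw [hfac, norm_mul, Real.rpow_neg (by positivity), Real.rpow_natCast, ← div_eq_mul_inv,
    le_div_iff₀ hpos, mul_assoc, mul_comm _ ((1 + |t|) ^ N)]
  have := mul_le_mul_of_nonneg_left (hb.trans (le_abs_self C)) (norm_nonneg K)
  linarith
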